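/- Let T > 0, let (Ω, P) be a probability space, let q̄, ν ∈ (1, ∞), and let φ, ψ : [0,T] × Ω → ℝ^m be jointly measurable with ‖φ‖ := (∫₀^T (E|φ(t)|^{q̄})^{ν/q̄} dt)^{1/ν} < ∞, ‖ψ‖ < ∞ (same norm), and ‖φ‖ ≠ 0. Then the real function δ ↦ ½ (∫₀^T (E|φ(t)+δψ(t)|^{q̄})^{ν/q̄} dt)^{2/ν} is differentiable at δ = 0, and its derivative equals ‖φ‖^{2−ν} · ∫₀^T (E|φ(t)|^{q̄})^{(ν−q̄)/q̄} · E[ |φ(t)|^{q̄−2} ⟨φ(t), ψ(t)⟩ ] dt, where the factor (E|φ(t)|^{q̄})^{(ν−q̄)/q̄} is interpreted as 0 whenever E|φ(t)|^{q̄} = 0. -/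

import Mathlib

open MeasureTheory ENNReal

/-- Euclidean norm on `Fin k → ℝ`. -/
noncomputable def eucNorm {k : ℕ} (v : Fin k → ℝ) : ℝ := Real.sqrt (∑ i, v i ^ 2)

/-- Euclidean inner product on `Fin k → ℝ`. -/
def eucInner {k : ℕ} (v w : Fin k → ℝ) : ℝ := ∑ i, v i * w i

/-! Both levels of the mixed norm are integrals of convex functions of `δ`: `‖X(ω) + δ Y(ω)‖^q` over
`Ω`, and `‖X(t) + δ Y(t)‖_{L^q}^ν` over time. The difference quotients of a convex function at a
point lie between two fixed ones, so dominated convergence differentiates under each integral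
without any estimate on the exponents. -/

section ConvexIntegral

open Set Filter Topology

lemma abs_slope_le_of_convexOn {s : Set ℝ} {f : ℝ → ℝ} (hf : ConvexOn ℝ s f) {a b x y : ℝ}
    (hx : x ∈ s) (ha : a ∈ s \ {x}) (hb : b ∈ s \ {x}) (hy : y ∈ Icc a b) (hyx : y ≠ x) :
    |slope f x y| ≤ max |slope f x a| |slope f x b| := by
  have hys : y ∈ s \ {x} := ⟨hf.1.ordConnected.out ha.1 hb.1 hy, hyx⟩
  exact abs_le_max_abs_abs (hf.slope_mono hx ha hys hy.1) (hf.slope_mono hx hys hb hy.2)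

variable {α : Type*} {mα : MeasurableSpace α} {μ : Measure α}

theorem hasDerivAt_integral_of_convexOn {F : ℝ → α → ℝ} {F' : α → ℝ} {x₀ : ℝ} {s : Set ℝ}
    (hs : s ∈ 𝓝 x₀) (hF_int : ∀ x ∈ s, Integrable (F x) μ)
    (hF_conv : ∀ᵐ a ∂μ, ConvexOn ℝ s (F · a)) (hF_diff : ∀ᵐ a ∂μ, HasDerivAt (F · a) (F' a) x₀) :
    HasDerivAt (fun x ↦ ∫ a, F x a ∂μ) (∫ a, F' a ∂μ) x₀ := by
  obtain ⟨r, hr, hrs⟩ := Metric.nhds_basis_closedBall.mem_iff.1 hs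
  rw [Real.closedBall_eq_Icc] at hrs
  have hx₀ : x₀ ∈ s := mem_of_mem_nhds hs
  have hleft : x₀ - r ∈ s := hrs ⟨le_rfl, by linarith⟩
  have hright : x₀ + r ∈ s := hrs ⟨by linarith, le_rfl⟩
  have hslope_int : ∀ y ∈ s, Integrable (fun a ↦ slope (F · a) x₀ y) μ := fun y hy ↦
    ((hF_int y hy).sub (hF_int x₀ hx₀)).const_mul (y - x₀)⁻¹
  have hnear : ∀ᶠ y in 𝓝[≠] x₀, y ∈ Icc (x₀ - r) (x₀ + r) ∧ y ≠ x₀ := by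
    filter_upwards [mem_nhdsWithin_of_mem_nhds (_root_.Icc_mem_nhds (sub_lt_self x₀ hr)
      (lt_add_of_pos_right x₀ hr)), self_mem_nhdsWithin] with y hy hne using ⟨hy, hne⟩
  have hlim : Tendsto (fun y ↦ ∫ a, slope (F · a) x₀ y ∂μ) (𝓝[≠] x₀) (𝓝 (∫ a, F' a ∂μ)) := by
    refine tendsto_integral_filter_of_dominated_convergence
      (fun a ↦ max |slope (F · a) x₀ (x₀ - r)| |slope (F · a) x₀ (x₀ + r)|) ?_ ?_ ?_ ?_
    · filter_upwards [hnear] with y hy using (hslope_int y (hrs hy.1)).aestronglyMeasurable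
    · filter_upwards [hnear] with y hy
      filter_upwards [hF_conv] with a ha
      exact abs_slope_le_of_convexOn ha hx₀ ⟨hleft, by simpa using hr.ne'⟩
        ⟨hright, by simpa using hr.ne'⟩ hy.1 hy.2
    · exact (hslope_int _ hleft).abs.sup (hslope_int _ hright).abs
    · filter_upwards [hF_diff] with a ha using hasDerivAt_iff_tendsto_slope.1 ha
  refine hasDerivAt_iff_tendsto_slope.2 (hlim.congr' ?_)
  filter_upwards [hnear] with y hy
  simp only [slope_def_field, integral_div, integral_sub (hF_int y (hrs hy.1)) (hF_int x₀ hx₀)]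

lemma convexOn_norm_add_smul_rpow {V : Type*} [SeminormedAddCommGroup V] [NormedSpace ℝ V]
    (x y : V) {p : ℝ} (hp : 1 ≤ p) : ConvexOn ℝ univ fun δ : ℝ ↦ ‖x + δ • y‖ ^ p := by
  have hnorm : ConvexOn ℝ univ fun δ : ℝ ↦ ‖x + δ • y‖ := by
    simpa [Function.comp_def] using (convexOn_univ_norm.translate_right x).comp_linearMap
      (LinearMap.toSpanSingleton ℝ V y)
  refine ⟨convex_univ, fun δ _ ε _ a b ha hb hab ↦ ?_⟩
  calc ‖x + (a • δ + b • ε) • y‖ ^ p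
      ≤ (a • ‖x + δ • y‖ + b • ‖x + ε • y‖) ^ p := by
        gcongr
        exact hnorm.2 trivial trivial ha hb hab
    _ ≤ a • ‖x + δ • y‖ ^ p + b • ‖x + ε • y‖ ^ p :=
        (convexOn_rpow hp).2 (norm_nonneg _) (norm_nonneg _) ha hb hab

end ConvexIntegral

section Moment

variable {Ω E : Type*} [MeasurableSpace Ω] [NormedAddCommGroup E]

/-- The absolute moment `E|X|^q` of a random vector, valued in `[0, ∞]`. -/
noncomputable def absMoment (q : ℝ) (P : Measure Ω) (X : Ω → E) : ℝ≥0∞ :=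
  ∫⁻ ω, ‖X ω‖ₑ ^ q ∂P

variable {P : Measure Ω} {q ν : ℝ} {X Y : Ω → E}

lemma absMoment_rpow_eq_eLpNorm_rpow (hq : 0 < q) (X : Ω → E) :
    absMoment q P X ^ (ν / q) = eLpNorm X (ENNReal.ofReal q) P ^ ν := by
  rw [eLpNorm_eq_lintegral_rpow_enorm_toReal (by simpa using hq) ofReal_ne_top,
    toReal_ofReal hq.le, ← ENNReal.rpow_mul, one_div_mul_eq_div, absMoment]

lemma absMoment_lt_top_iff_memLp (hq : 0 < q) (hX : AEStronglyMeasurable X P) :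
    absMoment q P X < ⊤ ↔ MemLp X (ENNReal.ofReal q) P := by
  have := eLpNorm_lt_top_iff_lintegral_rpow_enorm_lt_top (f := X) (μ := P)
    (by simpa using hq : ENNReal.ofReal q ≠ 0) ofReal_ne_top
  rw [toReal_ofReal hq.le] at this
  exact this.symm.trans (and_iff_right hX).symm

lemma toReal_absMoment (hq : 0 ≤ q) (hX : AEStronglyMeasurable X P) :
    (absMoment q P X).toReal = ∫ ω, ‖X ω‖ ^ q ∂P := by
  rw [integral_eq_lintegral_of_nonneg_ae (ae_of_all _ fun ω ↦ by positivity)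
    (hX.norm.aemeasurable.pow_const q).aestronglyMeasurable, absMoment]
  simp only [← ENNReal.ofReal_rpow_of_nonneg (norm_nonneg _) hq, ofReal_norm]

lemma toReal_absMoment_rpow_eq_norm_toLp (hq : 0 < q) (hX : MemLp X (ENNReal.ofReal q) P) :
    (absMoment q P X ^ (ν / q)).toReal = ‖hX.toLp X‖ ^ ν := by
  rw [absMoment_rpow_eq_eLpNorm_rpow hq, ← ENNReal.toReal_rpow, Lp.norm_toLp]

lemma toReal_absMoment_add_smul_rpow [NormedSpace ℝ E] (hq : 0 < q)
    (hX : MemLp X (ENNReal.ofReal q) P) (hY : MemLp Y (ENNReal.ofReal q) P) (δ : ℝ) :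
    (absMoment q P (X + δ • Y) ^ (ν / q)).toReal = ‖hX.toLp X + δ • hY.toLp Y‖ ^ ν :=
  toReal_absMoment_rpow_eq_norm_toLp hq (hX.add (hY.const_smul δ))

lemma convexOn_toReal_absMoment_add_smul_rpow [NormedSpace ℝ E] (hq : 1 ≤ q) (hν : 1 ≤ ν)
    (hX : MemLp X (ENNReal.ofReal q) P) (hY : MemLp Y (ENNReal.ofReal q) P) :
    ConvexOn ℝ Set.univ fun δ : ℝ ↦ (absMoment q P (X + δ • Y) ^ (ν / q)).toReal := by
  have : Fact (1 ≤ ENNReal.ofReal q) := ⟨by simpa using hq⟩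
  simp only [toReal_absMoment_add_smul_rpow (zero_lt_one.trans_le hq) hX hY]
  exact convexOn_norm_add_smul_rpow _ _ hν

end Moment

section MomentDeriv

variable {Ω E : Type*} [MeasurableSpace Ω] [NormedAddCommGroup E] [InnerProductSpace ℝ E]

/-- The pairing `E[|X|^(q-2) ⟨X, Y⟩]`: up to the factor `q`, the derivative of `E|·|^q` at `X` in
the direction `Y`. -/
noncomputable def powerPairing (q : ℝ) (P : Measure Ω) (X Y : Ω → E) : ℝ :=
  ∫ ω, ‖X ω‖ ^ (q - 2) * inner ℝ (X ω) (Y ω) ∂P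

/-- The factor `(E|X|^q)^((ν-q)/q)`, with the value `0` when `E|X|^q = 0`. -/
noncomputable def momentWeight (q ν : ℝ) (P : Measure Ω) (X : Ω → E) : ℝ :=
  if absMoment q P X = 0 then 0 else (absMoment q P X).toReal ^ ((ν - q) / q)

variable {P : Measure Ω} {q ν : ℝ} {X Y : Ω → E}

lemma hasDerivAt_norm_add_smul_rpow (hq : 1 < q) (x y : E) :
    HasDerivAt (fun δ : ℝ ↦ ‖x + δ • y‖ ^ q) (q * (‖x‖ ^ (q - 2) * inner ℝ x y)) 0 := by
  have hline : HasDerivAt (fun δ : ℝ ↦ x + δ • y) y 0 := by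
    simpa using ((hasDerivAt_id (0 : ℝ)).smul_const y).const_add x
  refine ((hasFDerivAt_norm_rpow _ hq).comp_hasDerivAt 0 hline).congr_deriv ?_
  simp [mul_assoc]

lemma hasDerivAt_integral_norm_add_smul_rpow (hq : 1 < q)
    (hX : MemLp X (ENNReal.ofReal q) P) (hY : MemLp Y (ENNReal.ofReal q) P) :
    HasDerivAt (fun δ : ℝ ↦ ∫ ω, ‖X ω + δ • Y ω‖ ^ q ∂P) (q * powerPairing q P X Y) 0 := by
  have hq₀ : 0 < q := by linarith
  rw [powerPairing, ← integral_const_mul]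
  refine hasDerivAt_integral_of_convexOn Filter.univ_mem (fun δ _ ↦ ?_)
    (ae_of_all _ fun ω ↦ convexOn_norm_add_smul_rpow (X ω) (Y ω) hq.le)
    (ae_of_all _ fun ω ↦ hasDerivAt_norm_add_smul_rpow hq (X ω) (Y ω))
  simpa [hq₀.le] using
    (hX.add (hY.const_smul δ)).integrable_norm_rpow (by simpa using hq₀) ofReal_ne_top

theorem hasDerivAt_toReal_absMoment_rpow (hq : 1 < q) (hν : 1 < ν)
    (hX : MemLp X (ENNReal.ofReal q) P) (hY : MemLp Y (ENNReal.ofReal q) P) :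
    HasDerivAt (fun δ : ℝ ↦ (absMoment q P (X + δ • Y) ^ (ν / q)).toReal)
      (ν * (momentWeight q ν P X * powerPairing q P X Y)) 0 := by
  have hq₀ : 0 < q := by linarith
  have hν₀ : 0 < ν := by linarith
  rw [momentWeight]
  split_ifs with hX₀
  · have : Fact (1 ≤ ENNReal.ofReal q) := ⟨by simpa using hq.le⟩
    have hLp : hX.toLp X = 0 := by
      have hnorm := toReal_absMoment_rpow_eq_norm_toLp (ν := ν) hq₀ hX
      rw [hX₀, ENNReal.zero_rpow_of_pos (by positivity), toReal_zero, eq_comm,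
        Real.rpow_eq_zero (norm_nonneg _) hν₀.ne'] at hnorm
      exact norm_eq_zero.1 hnorm
    simp only [toReal_absMoment_add_smul_rpow hq₀ hX hY, hLp, zero_add, norm_smul,
      Real.mul_rpow (norm_nonneg _) (norm_nonneg _)]
    simpa using (hasDerivAt_norm_rpow 0 hν).mul_const (‖hY.toLp Y‖ ^ ν)
  · have hmoment : HasDerivAt (fun δ : ℝ ↦ (absMoment q P (X + δ • Y)).toReal)
        (q * powerPairing q P X Y) 0 := by
      simpa only [toReal_absMoment hq₀.le (hX.add (hY.const_smul _)).aestronglyMeasurable,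
        Pi.add_apply, Pi.smul_apply]
        using hasDerivAt_integral_norm_add_smul_rpow hq hX hY
    have hne : (absMoment q P X).toReal ≠ 0 :=
      (toReal_pos hX₀ ((absMoment_lt_top_iff_memLp hq₀ hX.aestronglyMeasurable).2 hX).ne).ne'
    simp only [← ENNReal.toReal_rpow]
    refine (hmoment.rpow_const (p := ν / q) (.inl (by simpa using hne))).congr_deriv ?_
    rw [zero_smul, add_zero, sub_div, div_self hq₀.ne']
    field_simp

end MomentDeriv

section MixedMoment

variable {α Ω E : Type*} [MeasurableSpace α] [MeasurableSpace Ω] [NormedAddCommGroup E]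

/-- The `ν`-th power of the norm of `Z` in `L^ν(μ; L^q(P; E))`, valued in `[0, ∞]`. -/
noncomputable def mixedMoment (q ν : ℝ) (μ : Measure α) (P : Measure Ω) (Z : α × Ω → E) : ℝ≥0∞ :=
  ∫⁻ t, absMoment q P (fun ω ↦ Z (t, ω)) ^ (ν / q) ∂μ

variable {μ : Measure α} {P : Measure Ω} {q ν : ℝ} {X Y Z : α × Ω → E}

lemma measurable_absMoment_section [SFinite P] (hZ : StronglyMeasurable Z) :
    Measurable fun t ↦ absMoment q P fun ω ↦ Z (t, ω) :=
  (hZ.enorm.pow_const q).lintegral_prod_right'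

lemma ae_memLp_section_of_mixedMoment_lt_top [SFinite P] (hq : 0 < q) (hν : 0 < ν)
    (hZ : StronglyMeasurable Z) (hfin : mixedMoment q ν μ P Z < ⊤) :
    ∀ᵐ t ∂μ, MemLp (fun ω ↦ Z (t, ω)) (ENNReal.ofReal q) P := by
  filter_upwards [ae_lt_top ((measurable_absMoment_section hZ).pow_const _) hfin.ne] with t ht
  exact (absMoment_lt_top_iff_memLp hq
    (hZ.comp_measurable measurable_prodMk_left).aestronglyMeasurable).1
    ((ENNReal.rpow_lt_top_iff_of_pos (div_pos hν hq)).1 ht)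

lemma mixedMoment_add_lt_top [SFinite P] (hq : 1 ≤ q) (hν : 1 ≤ ν)
    (hX : StronglyMeasurable X) (hY : StronglyMeasurable Y)
    (hXfin : mixedMoment q ν μ P X < ⊤) (hYfin : mixedMoment q ν μ P Y < ⊤) :
    mixedMoment q ν μ P (X + Y) < ⊤ := by
  have hq₀ : 0 < q := by linarith
  have hmeas : Measurable fun t ↦ eLpNorm (fun ω ↦ X (t, ω)) (ENNReal.ofReal q) P := by
    simpa only [absMoment_rpow_eq_eLpNorm_rpow hq₀, ENNReal.rpow_one] using
      (measurable_absMoment_section (q := q) (P := P) hX).pow_const (1 / q)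
  simp only [mixedMoment, absMoment_rpow_eq_eLpNorm_rpow hq₀] at hXfin hYfin ⊢
  refine (lintegral_mono fun t ↦ ?_).trans_lt
    (lintegral_rpow_add_lt_top_of_lintegral_rpow_lt_top hmeas.aemeasurable hXfin hYfin hν)
  exact ENNReal.rpow_le_rpow (eLpNorm_add_le
    (hX.comp_measurable measurable_prodMk_left).aestronglyMeasurable
    (hY.comp_measurable measurable_prodMk_left).aestronglyMeasurable (by simpa using hq))
    (by linarith)

lemma mixedMoment_const_smul [NormedSpace ℝ E] (hq : 0 < q) (hν : 0 ≤ ν) (δ : ℝ)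
    (Z : α × Ω → E) : mixedMoment q ν μ P (δ • Z) = ‖δ‖ₑ ^ ν * mixedMoment q ν μ P Z := by
  have hsection (t : α) : eLpNorm (fun ω ↦ (δ • Z) (t, ω)) (ENNReal.ofReal q) P =
      ‖δ‖ₑ * eLpNorm (fun ω ↦ Z (t, ω)) (ENNReal.ofReal q) P := eLpNorm_const_smul ..
  simp only [mixedMoment, absMoment_rpow_eq_eLpNorm_rpow hq, hsection,
    ENNReal.mul_rpow_of_nonneg _ _ hν]
  exact lintegral_const_mul' _ _ (rpow_ne_top_of_nonneg hν enorm_ne_top)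

lemma mixedMoment_add_smul_lt_top [SFinite P] [NormedSpace ℝ E] (hq : 1 ≤ q) (hν : 1 ≤ ν)
    (hX : StronglyMeasurable X) (hY : StronglyMeasurable Y)
    (hXfin : mixedMoment q ν μ P X < ⊤) (hYfin : mixedMoment q ν μ P Y < ⊤) (δ : ℝ) :
    mixedMoment q ν μ P (X + δ • Y) < ⊤ := by
  refine mixedMoment_add_lt_top hq hν hX (hY.const_smul δ) hXfin ?_
  rw [mixedMoment_const_smul (by linarith) (by linarith)]
  exact mul_lt_top (rpow_lt_top_of_nonneg (by linarith) enorm_ne_top) hYfin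

lemma toReal_mixedMoment [SFinite P] (hZ : StronglyMeasurable Z)
    (hfin : mixedMoment q ν μ P Z < ⊤) :
    (mixedMoment q ν μ P Z).toReal =
      ∫ t, (absMoment q P (fun ω ↦ Z (t, ω)) ^ (ν / q)).toReal ∂μ :=
  have hmeas := (measurable_absMoment_section hZ).pow_const (ν / q)
  (integral_toReal hmeas.aemeasurable (ae_lt_top hmeas hfin.ne)).symm

variable [InnerProductSpace ℝ E]

theorem hasDerivAt_toReal_mixedMoment [SFinite P] (hq : 1 < q) (hν : 1 < ν)
    (hX : StronglyMeasurable X) (hY : StronglyMeasurable Y)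
    (hXfin : mixedMoment q ν μ P X < ⊤) (hYfin : mixedMoment q ν μ P Y < ⊤) :
    HasDerivAt (fun δ : ℝ ↦ (mixedMoment q ν μ P (X + δ • Y)).toReal)
      (ν * ∫ t, momentWeight q ν P (fun ω ↦ X (t, ω)) *
        powerPairing q P (fun ω ↦ X (t, ω)) (fun ω ↦ Y (t, ω)) ∂μ) 0 := by
  have hmeas (δ : ℝ) : StronglyMeasurable (X + δ • Y) := hX.add (hY.const_smul δ)
  have hfin := mixedMoment_add_smul_lt_top hq.le hν.le hX hY hXfin hYfin
  have hXmem := ae_memLp_section_of_mixedMoment_lt_top (by linarith) (by linarith) hX hXfin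
  have hYmem := ae_memLp_section_of_mixedMoment_lt_top (by linarith) (by linarith) hY hYfin
  simp only [toReal_mixedMoment (hmeas _) (hfin _)]
  rw [← integral_const_mul]
  refine hasDerivAt_integral_of_convexOn Filter.univ_mem (fun δ _ ↦ ?_) ?_ ?_
  · exact integrable_toReal_of_lintegral_ne_top
      ((measurable_absMoment_section (hmeas δ)).pow_const _).aemeasurable (hfin δ).ne
  · filter_upwards [hXmem, hYmem] with t hXt hYt
    exact convexOn_toReal_absMoment_add_smul_rpow hq.le hν.le hXt hYt
  · filter_upwards [hXmem, hYmem] with t hXt hYt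
    exact hasDerivAt_toReal_absMoment_rpow hq hν hXt hYt

theorem stmt_11_general [SFinite P] (hq : 1 < q) (hν : 1 < ν)
    (hX : StronglyMeasurable X) (hY : StronglyMeasurable Y)
    (hXfin : mixedMoment q ν μ P X < ⊤) (hYfin : mixedMoment q ν μ P Y < ⊤)
    (hX₀ : mixedMoment q ν μ P X ≠ 0) :
    HasDerivAt (fun δ : ℝ ↦ (1 / 2 : ℝ) * (mixedMoment q ν μ P (X + δ • Y)).toReal ^ (2 / ν))
      (((mixedMoment q ν μ P X).toReal ^ (1 / ν)) ^ (2 - ν) *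
        ∫ t, momentWeight q ν P (fun ω ↦ X (t, ω)) *
          powerPairing q P (fun ω ↦ X (t, ω)) (fun ω ↦ Y (t, ω)) ∂μ) 0 := by
  have hν₀ : ν ≠ 0 := by linarith
  have hpos : 0 < (mixedMoment q ν μ P X).toReal := toReal_pos hX₀ hXfin.ne
  have hexp : 1 / ν * (2 - ν) = 2 / ν - 1 := by field_simp
  have hmoment := hasDerivAt_toReal_mixedMoment hq hν hX hY hXfin hYfin
  refine ((hmoment.rpow_const (p := 2 / ν) (.inl (by simpa using hpos.ne'))).const_mul
    (1 / 2)).congr_deriv ?_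
  rw [zero_smul, add_zero, ← Real.rpow_mul hpos.le, hexp]
  field_simp

end MixedMoment

section Euclidean

variable {k : ℕ}

lemma eucNorm_eq_norm_toLp (v : Fin k → ℝ) : eucNorm v = ‖WithLp.toLp 2 v‖ := by
  simp [eucNorm, EuclideanSpace.norm_eq]

lemma eucInner_eq_inner_toLp (v w : Fin k → ℝ) :
    eucInner v w = inner ℝ (WithLp.toLp 2 v) (WithLp.toLp 2 w) := by
  simp [eucInner, PiLp.inner_apply, mul_comm]

variable {α Ω : Type*} [MeasurableSpace α] [MeasurableSpace Ω] {μ : Measure α} {P : Measure Ω}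
  {q ν : ℝ}

lemma absMoment_toLp (X : Ω → Fin k → ℝ) :
    absMoment q P (fun ω ↦ WithLp.toLp 2 (X ω)) =
      ∫⁻ ω, ENNReal.ofReal (eucNorm (X ω)) ^ q ∂P := by
  simp only [absMoment, eucNorm_eq_norm_toLp, ofReal_norm]

lemma mixedMoment_toLp (Z : α × Ω → Fin k → ℝ) :
    mixedMoment q ν μ P (fun z ↦ WithLp.toLp 2 (Z z)) =
      ∫⁻ t, (∫⁻ ω, ENNReal.ofReal (eucNorm (Z (t, ω))) ^ q ∂P) ^ (ν / q) ∂μ := by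
  simp only [mixedMoment, absMoment_toLp]

lemma powerPairing_toLp (X Y : Ω → Fin k → ℝ) :
    powerPairing q P (fun ω ↦ WithLp.toLp 2 (X ω)) (fun ω ↦ WithLp.toLp 2 (Y ω)) =
      ∫ ω, eucNorm (X ω) ^ (q - 2) * eucInner (X ω) (Y ω) ∂P := by
  simp only [powerPairing, eucNorm_eq_norm_toLp, eucInner_eq_inner_toLp]

end Euclidean

/-- Let `q̄, ν ∈ (1,∞)` and let `φ, ψ` be jointly measurable processes
with finite `L^{ν}(0,T; L^{q̄}(Ω;ℝ^m))` mixed norm; write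
`N(δ) = ∫₀^T (E|φ(t)+δψ(t)|^{q̄})^{ν/q̄} dt`, so that `‖φ+δψ‖ = N(δ)^{1/ν}`. If `‖φ‖ ≠ 0`,
then `δ ↦ ½‖φ+δψ‖²` is differentiable at `δ = 0` with derivative
`‖φ‖^{2−ν} ∫₀^T (E|φ(t)|^{q̄})^{(ν−q̄)/q̄} E[|φ(t)|^{q̄−2}⟨φ(t),ψ(t)⟩] dt`,
where the factor `(E|φ(t)|^{q̄})^{(ν−q̄)/q̄}` is interpreted as `0` whenever
`E|φ(t)|^{q̄} = 0`. -/
theorem stmt_11 {m : ℕ} {Ω : Type*} [MeasurableSpace Ω] (P : Measure Ω)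
    [IsProbabilityMeasure P]
    (T ν qb : ℝ) (hT : 0 < T) (hq : 1 < qb) (hν : 1 < ν)
    (φ ψ : ℝ × Ω → Fin m → ℝ) (hφ : Measurable φ) (hψ : Measurable ψ)
    (c : ℝ → ℝ≥0∞)
    (hc : ∀ t, c t = ∫⁻ ω, ENNReal.ofReal (eucNorm (φ (t, ω))) ^ qb ∂P)
    (N : ℝ → ℝ≥0∞)
    (hN : ∀ δ : ℝ, N δ = ∫⁻ t in Set.Ioc 0 T,
        (∫⁻ ω, ENNReal.ofReal (eucNorm (φ (t, ω) + δ • ψ (t, ω))) ^ qb ∂P) ^ (ν / qb))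
    (hφfin : N 0 < ⊤)
    (hψfin : ∫⁻ t in Set.Ioc 0 T,
        (∫⁻ ω, ENNReal.ofReal (eucNorm (ψ (t, ω))) ^ qb ∂P) ^ (ν / qb) < ⊤)
    (hφne : N 0 ≠ 0) :
    HasDerivAt (fun δ : ℝ => (1 / 2 : ℝ) * (N δ).toReal ^ (2 / ν))
      (((N 0).toReal ^ (1 / ν)) ^ (2 - ν) *
        ∫ t in Set.Ioc 0 T,
          (if c t = 0 then 0 else (c t).toReal ^ ((ν - qb) / qb)) *
            ∫ ω, eucNorm (φ (t, ω)) ^ (qb - 2) * eucInner (φ (t, ω)) (ψ (t, ω)) ∂P)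
      0 := by
  have hmeas {Z : ℝ × Ω → Fin m → ℝ} (hZ : Measurable Z) :
      StronglyMeasurable fun z ↦ WithLp.toLp 2 (Z z) :=
    ((PiLp.continuous_toLp 2 _).measurable.comp hZ).stronglyMeasurable
  have hN_eq (δ : ℝ) : N δ = mixedMoment qb ν (volume.restrict (Set.Ioc 0 T)) P
      ((fun z ↦ WithLp.toLp 2 (φ z)) + δ • fun z ↦ WithLp.toLp 2 (ψ z)) :=
    (hN δ).trans (mixedMoment_toLp fun z ↦ φ z + δ • ψ z).symm
  rw [hN_eq, zero_smul, add_zero] at hφfin hφne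
  rw [← mixedMoment_toLp] at hψfin
  simpa only [hN_eq, hc, zero_smul, add_zero, momentWeight, absMoment_toLp, powerPairing_toLp]
    using stmt_11_general hq hν (hmeas hφ) (hmeas hψ) hφfin hψfin hφne
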